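/- arXiv:1108.4257 — 2 statements merged into one kernel-verified Lean document; each statement's English description precedes it below -/
import Mathlib

section
/- If LOC(H,T) is degraded, then it has a unique subspace degradation and it is row-space symmetric. -/
open scoped Classical
open Finset Matrix Module

noncomputable section

/-- χ_m[r] = (q^m − 1)(q^m − q)⋯(q^m − q^{r−1}), with χ_m[0] = 1. -/
def chi (q m r : ℕ) : ℕ := ∏ i ∈ Finset.range r, (q ^ m - q ^ i)

/-- χ̃_m[r] = χ_m[r] · q^{−mr}, as a real number. -/
def chiTilde (q m r : ℕ) : ℝ := (chi q m r : ℝ) / (q : ℝ) ^ (m * r)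

/-- Gaussian binomial [m choose r]_q = χ_m[r]/χ_r[r], as a real number. -/
def gaussR (q m r : ℕ) : ℝ := (chi q m r : ℝ) / (chi q r r : ℝ)

variable {F : Type} [Field F] [Fintype F]

/-- Column space of a matrix. -/
def colSpace {m n : ℕ} (A : Matrix (Fin m) (Fin n) F) : Submodule F (Fin m → F) :=
  LinearMap.range A.mulVecLin

/-- Row space of a matrix. -/
def rowSpace {m n : ℕ} (A : Matrix (Fin m) (Fin n) F) : Submodule F (Fin n → F) :=
  colSpace Aᵀ

/-- Pr{XH = Y} for a random transfer matrix H with PMF `pH`, input `X`, output `Y`. -/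
def prXY {k M N : ℕ} (pH : Matrix (Fin M) (Fin N) F → ℝ)
    (X : Matrix (Fin k) (Fin M) F) (Y : Matrix (Fin k) (Fin N) F) : ℝ :=
  ∑ Hm : Matrix (Fin M) (Fin N) F, if X * Hm = Y then pH Hm else 0

/-- A PMF on a finite type: nonnegative and summing to one. -/
def IsPMF {Ω : Type*} [Fintype Ω] (p : Ω → ℝ) : Prop :=
  (∀ x, 0 ≤ p x) ∧ ∑ x, p x = 1

/-- α-type distribution: matrices with the same row space are equiprobable. -/
def IsAlphaType {T M : ℕ} (p : Matrix (Fin T) (Fin M) F → ℝ) : Prop :=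
  ∀ X X' : Matrix (Fin T) (Fin M) F, rowSpace X = rowSpace X' → p X = p X'

/-- Mutual information I(f;g) (base 2) between two functions of a finitely
distributed random element with PMF `p`; terms of zero probability vanish. -/
def mutualInfo {Ω A B : Type*} [Fintype Ω] (p : Ω → ℝ) (f : Ω → A) (g : Ω → B) : ℝ :=
  ∑ ω : Ω, p ω * Real.logb 2
    ((∑ ω' : Ω, if f ω' = f ω ∧ g ω' = g ω then p ω' else 0) /
      ((∑ ω' : Ω, if f ω' = f ω then p ω' else 0) *
        (∑ ω' : Ω, if g ω' = g ω then p ω' else 0)))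

/-- Joint PMF of the input X and the independent transfer matrix H;
the channel output is Y = XH, i.e., `ω.1 * ω.2`. -/
def jointPMF {T M N : ℕ} (pX : Matrix (Fin T) (Fin M) F → ℝ)
    (pH : Matrix (Fin M) (Fin N) F → ℝ) :
    Matrix (Fin T) (Fin M) F × Matrix (Fin M) (Fin N) F → ℝ :=
  fun ω => pX ω.1 * pH ω.2

/-- I(X;Y) for the LOC with input PMF `pX` and transfer PMF `pH`. -/
def miXY {T M N : ℕ} (pX : Matrix (Fin T) (Fin M) F → ℝ)
    (pH : Matrix (Fin M) (Fin N) F → ℝ) : ℝ :=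
  mutualInfo (jointPMF pX pH) (fun ω => ω.1) (fun ω => ω.1 * ω.2)

/-- I(⟨X⟩;⟨Y⟩), mutual information between the column spaces. -/
def miColCol {T M N : ℕ} (pX : Matrix (Fin T) (Fin M) F → ℝ)
    (pH : Matrix (Fin M) (Fin N) F → ℝ) : ℝ :=
  mutualInfo (jointPMF pX pH) (fun ω => colSpace ω.1) (fun ω => colSpace (ω.1 * ω.2))

/-- I(⟨X^T⟩;⟨Y^T⟩), mutual information between the row spaces. -/
def miRowRow {T M N : ℕ} (pX : Matrix (Fin T) (Fin M) F → ℝ)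
    (pH : Matrix (Fin M) (Fin N) F → ℝ) : ℝ :=
  mutualInfo (jointPMF pX pH) (fun ω => rowSpace ω.1) (fun ω => rowSpace (ω.1 * ω.2))

/-- I(rank(X);rank(Y)). -/
def miRankRank {T M N : ℕ} (pX : Matrix (Fin T) (Fin M) F → ℝ)
    (pH : Matrix (Fin M) (Fin N) F → ℝ) : ℝ :=
  mutualInfo (jointPMF pX pH) (fun ω => ω.1.rank) (fun ω => (ω.1 * ω.2).rank)

/-- Pr{rank(X) = r}. -/
def prRankX {T M : ℕ} (pX : Matrix (Fin T) (Fin M) F → ℝ) (r : ℕ) : ℝ :=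
  ∑ x : Matrix (Fin T) (Fin M) F, if x.rank = r then pX x else 0

/-- Pr{rank(X) = r, rank(Y) = s} where Y = XH. -/
def prRankXY {T M N : ℕ} (pX : Matrix (Fin T) (Fin M) F → ℝ)
    (pH : Matrix (Fin M) (Fin N) F → ℝ) (r s : ℕ) : ℝ :=
  ∑ ω : Matrix (Fin T) (Fin M) F × Matrix (Fin M) (Fin N) F,
    if ω.1.rank = r ∧ (ω.1 * ω.2).rank = s then jointPMF pX pH ω else 0

/-- J(rank(X);rank(Y)) = ∑_{r,s} Pr{rank X = r, rank Y = s} · log₂(χ_T[s]/χ_r[s]). -/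
def Jrank (q : ℕ) {T M N : ℕ} (pX : Matrix (Fin T) (Fin M) F → ℝ)
    (pH : Matrix (Fin M) (Fin N) F → ℝ) : ℝ :=
  ∑ r ∈ Finset.range (T + 1), ∑ s ∈ Finset.range (T + 1),
    prRankXY pX pH r s * Real.logb 2 ((chi q T s : ℝ) / (chi q r s : ℝ))

/-- Row-space-symmetric LOC: the transition probability P(Y|X) for ⟨Y⟩ ⊆ ⟨X⟩
is determined by the row spaces of the input and output matrices. -/
def RowSpaceSymmetric (T : ℕ) {M N : ℕ} (pH : Matrix (Fin M) (Fin N) F → ℝ) : Prop :=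
  ∀ (X X' : Matrix (Fin T) (Fin M) F) (Y Y' : Matrix (Fin T) (Fin N) F),
    colSpace Y ≤ colSpace X → colSpace Y' ≤ colSpace X' →
    rowSpace X = rowSpace X' → rowSpace Y = rowSpace Y' →
    prXY pH X Y = prXY pH X' Y'

/-- Pr{⟨XH⟩ = V} for a fixed input matrix X. -/
def prColY (T : ℕ) {M N : ℕ} (pH : Matrix (Fin M) (Fin N) F → ℝ)
    (X : Matrix (Fin T) (Fin M) F) (V : Submodule F (Fin T → F)) : ℝ :=
  ∑ Hm : Matrix (Fin M) (Fin N) F, if colSpace (X * Hm) = V then pH Hm else 0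

/-- Unique subspace degradation: Pr{⟨XH⟩ = V} is the same for all inputs X
with the same column space. -/
def UniqueSubspaceDegradation (T : ℕ) {M N : ℕ}
    (pH : Matrix (Fin M) (Fin N) F → ℝ) : Prop :=
  ∀ (V : Submodule F (Fin T → F)) (X X' : Matrix (Fin T) (Fin M) F),
    colSpace X = colSpace X' → prColY T pH X V = prColY T pH X' V

/-- Rank-symmetric LOC: P(Y|X) = μ(rank X, rank Y) when ⟨Y⟩ ⊆ ⟨X⟩, and 0 otherwise. -/
def RankSymmetric (T : ℕ) {M N : ℕ} (pH : Matrix (Fin M) (Fin N) F → ℝ) : Prop :=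
  ∃ μ : ℕ → ℕ → ℝ, (∀ a b, 0 ≤ μ a b ∧ μ a b ≤ 1) ∧
    ∀ (X : Matrix (Fin T) (Fin M) F) (Y : Matrix (Fin T) (Fin N) F),
      prXY pH X Y = if colSpace Y ≤ colSpace X then μ X.rank Y.rank else 0

/-- rank*(H) = max{r : Pr{rank H = r} > 0}. -/
def rankStar {M N : ℕ} (pH : Matrix (Fin M) (Fin N) F → ℝ) : ℕ :=
  sSup {r : ℕ | 0 < ∑ Hm : Matrix (Fin M) (Fin N) F, if Hm.rank = r then pH Hm else 0}

/-!
An input distribution supported on matrices with one fixed column space makes ⟨X⟩ constant, so a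
degraded channel has I(X;Y) = I(⟨X⟩;⟨Y⟩) = 0, and the equality case of Gibbs' inequality makes X and
Y independent. For the uniform distribution on all matrices with that column space this says that
P(Y|X) depends on X only through ⟨X⟩, and unique subspace degradation follows by summing over Y.
For row-space symmetry, matrices with equal row spaces have equal kernels, which yields an
invertible Q with QY = Y' and ⟨QX⟩ = ⟨X'⟩; then P(Y|X) = P(QY|QX) = P(Y'|X'), the last step because
the transition probability depends on the input only through its column space.
-/

theorem sum_mul_log_div_eq_zero_iff {ι : Type*} {s : Finset ι} {a b : ι → ℝ}
    (ha : ∀ i ∈ s, 0 ≤ a i) (hb : ∀ i ∈ s, 0 ≤ b i) (hab : ∀ i ∈ s, b i = 0 → a i = 0)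
    (hsum : ∑ i ∈ s, a i = ∑ i ∈ s, b i) :
    ∑ i ∈ s, a i * Real.log (a i / b i) = 0 ↔ ∀ i ∈ s, a i = b i := by
  have hkl : ∀ i ∈ s, b i * InformationTheory.klFun (a i / b i) =
      a i * Real.log (a i / b i) + (b i - a i) := by
    intro i hi
    rcases eq_or_ne (b i) 0 with h | h
    · simp only [h, hab i hi h, zero_mul, sub_zero, add_zero]
    · rw [InformationTheory.klFun_apply]
      field_simp
      ring
  have hratio : ∀ i ∈ s, 0 ≤ a i / b i := fun i hi => div_nonneg (ha i hi) (hb i hi)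
  have hsum_kl : ∑ i ∈ s, a i * Real.log (a i / b i) =
      ∑ i ∈ s, b i * InformationTheory.klFun (a i / b i) := by
    rw [sum_congr rfl hkl, sum_add_distrib, sum_sub_distrib, hsum, sub_self, add_zero]
  rw [hsum_kl, sum_eq_zero_iff_of_nonneg fun i hi =>
    mul_nonneg (hb i hi) (InformationTheory.klFun_nonneg (hratio i hi))]
  refine forall₂_congr fun i hi => ?_
  rw [mul_eq_zero, InformationTheory.klFun_eq_zero_iff (hratio i hi)]
  rcases eq_or_ne (b i) 0 with h | h
  · simp only [h, hab i hi h, true_or]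
  · simp only [h, false_or, div_eq_one_iff_eq h]

section Pushforward

variable {Ω A B : Type*} [Fintype Ω]

/-- The law of `f` under the mass function `p`, i.e. `a ↦ Pr{f = a}`. -/
def pushforward (p : Ω → ℝ) (f : Ω → A) (a : A) : ℝ :=
  ∑ ω, if f ω = a then p ω else 0

lemma pushforward_nonneg {p : Ω → ℝ} (hp : ∀ ω, 0 ≤ p ω) (f : Ω → A) (a : A) :
    0 ≤ pushforward p f a :=
  sum_nonneg fun ω _ => ite_nonneg (hp ω) le_rfl

lemma pushforward_eq_zero {p : Ω → ℝ} {f : Ω → A} {a : A} (h : ∀ ω, f ω = a → p ω = 0) :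
    pushforward p f a = 0 :=
  sum_eq_zero fun ω _ => ite_eq_right_iff.mpr (h ω)

lemma sum_mul_comp_eq_sum_pushforward_mul (p : Ω → ℝ) {f : Ω → A} {s : Finset A}
    (hf : ∀ ω, f ω ∈ s) (φ : A → ℝ) :
    ∑ ω, p ω * φ (f ω) = ∑ a ∈ s, pushforward p f a * φ a := by
  simp only [pushforward, sum_mul, ite_mul, zero_mul]
  rw [sum_comm]
  exact sum_congr rfl fun ω _ => by rw [sum_ite_eq, if_pos (hf ω)]

lemma sum_pushforward (p : Ω → ℝ) {f : Ω → A} {s : Finset A} (hf : ∀ ω, f ω ∈ s) :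
    ∑ a ∈ s, pushforward p f a = ∑ ω, p ω := by
  simpa only [mul_one] using (sum_mul_comp_eq_sum_pushforward_mul p hf fun _ => 1).symm

lemma pushforward_comp [Fintype A] (p : Ω → ℝ) (f : Ω → A) (h : A → B) (b : B) :
    pushforward p (fun ω => h (f ω)) b = pushforward (pushforward p f) h b := by
  simpa only [pushforward, mul_ite, mul_one, mul_zero] using
    sum_mul_comp_eq_sum_pushforward_mul p (fun ω => mem_univ (f ω))
      fun a => if h a = b then 1 else 0

lemma pushforward_le_pushforward_comp {p : Ω → ℝ} (hp : ∀ ω, 0 ≤ p ω) (f : Ω → A) (h : A → B)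
    (a : A) : pushforward p f a ≤ pushforward p (fun ω => h (f ω)) (h a) := by
  refine sum_le_sum fun ω _ => ?_
  split_ifs with hf hcomp hcomp
  · exact le_rfl
  · exact absurd (congrArg h hf) hcomp
  · exact hp ω
  · exact le_rfl

lemma pushforward_pair_eq_zero_of_mul_eq_zero {p : Ω → ℝ} (hp : ∀ ω, 0 ≤ p ω) {f : Ω → A}
    {g : Ω → B} {c : A × B} (hc : pushforward p f c.1 * pushforward p g c.2 = 0) :
    pushforward p (fun ω => (f ω, g ω)) c = 0 := by
  have hnonneg : 0 ≤ pushforward p (fun ω => (f ω, g ω)) c := pushforward_nonneg hp _ c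
  rcases mul_eq_zero.mp hc with h | h
  · exact le_antisymm (h ▸ pushforward_le_pushforward_comp hp _ Prod.fst c) hnonneg
  · exact le_antisymm (h ▸ pushforward_le_pushforward_comp hp _ Prod.snd c) hnonneg

end Pushforward

section Independence

variable {Ω A B : Type*} [Fintype Ω] {p : Ω → ℝ} {f : Ω → A} {g : Ω → B}

/-- Independence of the random elements `f` and `g` under the mass function `p`: their joint law
is the product of their laws. -/
def IsIndep (p : Ω → ℝ) (f : Ω → A) (g : Ω → B) : Prop :=
  ∀ c : A × B, pushforward p (fun ω => (f ω, g ω)) c = pushforward p f c.1 * pushforward p g c.2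

lemma isIndep_of_const_on_support (hp : ∑ ω, p ω = 1) {a : A} (hf : ∀ ω, p ω ≠ 0 → f ω = a) :
    IsIndep p f g := by
  have hlaw : pushforward p f a = 1 := by
    rw [← hp]
    refine sum_congr rfl fun ω _ => ite_eq_left_iff.mpr fun h => ?_
    exact (not_imp_comm.mp (hf ω) h).symm
  rintro ⟨a', b⟩
  rcases eq_or_ne a' a with rfl | ha'
  · rw [hlaw, one_mul]
    refine sum_congr rfl fun ω _ => ?_
    rcases eq_or_ne (p ω) 0 with h | h
    · simp only [h, ite_self]
    · simp only [Prod.mk.injEq, hf ω h, true_and]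
  · have hzero : ∀ ω, f ω = a' → p ω = 0 := fun ω h =>
      not_imp_comm.mp (hf ω) (h.trans_ne ha')
    rw [pushforward_eq_zero hzero, zero_mul]
    exact pushforward_eq_zero fun ω h => hzero ω (congrArg Prod.fst h)

lemma mutualInfo_eq_sum_pushforward {s : Finset (A × B)} (hs : ∀ ω, (f ω, g ω) ∈ s) :
    mutualInfo p f g = (∑ c ∈ s, pushforward p (fun ω => (f ω, g ω)) c *
      Real.log (pushforward p (fun ω => (f ω, g ω)) c /
        (pushforward p f c.1 * pushforward p g c.2))) / Real.log 2 := by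
  rw [← sum_mul_comp_eq_sum_pushforward_mul p hs fun c =>
    Real.log (pushforward p (fun ω => (f ω, g ω)) c /
      (pushforward p f c.1 * pushforward p g c.2)), sum_div]
  refine sum_congr rfl fun ω _ => ?_
  simp only [pushforward, Prod.mk.injEq, Real.logb, mul_div_assoc]

theorem mutualInfo_eq_zero_iff_isIndep (hp : IsPMF p) :
    mutualInfo p f g = 0 ↔ IsIndep p f g := by
  let s : Finset (A × B) := univ.image f ×ˢ univ.image g
  have hf : ∀ ω, f ω ∈ univ.image f := fun ω => mem_image_of_mem f (mem_univ ω)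
  have hg : ∀ ω, g ω ∈ univ.image g := fun ω => mem_image_of_mem g (mem_univ ω)
  have hs : ∀ ω, (f ω, g ω) ∈ s := fun ω => mk_mem_product (hf ω) (hg ω)
  have htotal : ∑ c ∈ s, pushforward p (fun ω => (f ω, g ω)) c =
      ∑ c ∈ s, pushforward p f c.1 * pushforward p g c.2 := by
    rw [sum_pushforward p hs, sum_product, ← sum_mul_sum, sum_pushforward p hf,
      sum_pushforward p hg, hp.2, mul_one]
  rw [mutualInfo_eq_sum_pushforward hs, div_eq_zero_iff,
    or_iff_left (Real.log_pos one_lt_two).ne',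
    sum_mul_log_div_eq_zero_iff (fun c _ => pushforward_nonneg hp.1 _ c)
      (fun c _ => mul_nonneg (pushforward_nonneg hp.1 f _) (pushforward_nonneg hp.1 g _))
      (fun c _ => pushforward_pair_eq_zero_of_mul_eq_zero hp.1) htotal]
  refine ⟨fun h c => ?_, fun h c _ => h c⟩
  by_cases hc : c ∈ s
  · exact h c hc
  · have hprod : pushforward p f c.1 * pushforward p g c.2 = 0 := by
      rcases not_and_or.mp (mt mem_product.mpr hc) with h | h
      · rw [pushforward_eq_zero fun ω hω => (h (hω.subst (hf ω))).elim, zero_mul]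
      · rw [pushforward_eq_zero fun ω hω => (h (hω.subst (hg ω))).elim, mul_zero]
    rw [pushforward_pair_eq_zero_of_mul_eq_zero hp.1 hprod, hprod]

end Independence

section Channel

variable {α β γ : Type*} [Fintype β] {p : α → ℝ} {r : β → ℝ}

/-- The mass function of the uniform distribution on the finite set `s`; it vanishes identically
when `s` is empty. -/
def uniformOn (s : Finset α) (x : α) : ℝ :=
  if x ∈ s then (#s : ℝ)⁻¹ else 0

lemma uniformOn_ne_zero_iff {s : Finset α} {x : α} : uniformOn s x ≠ 0 ↔ x ∈ s := by
  refine ⟨fun h => by_contra fun hx => h (if_neg hx), fun hx => ?_⟩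
  rw [uniformOn, if_pos hx]
  exact inv_ne_zero (Nat.cast_ne_zero.mpr (card_ne_zero_of_mem hx))

variable [Fintype α]

lemma isPMF_uniformOn {s : Finset α} (hs : s.Nonempty) : IsPMF (uniformOn s) := by
  refine ⟨fun x => ite_nonneg (by positivity) le_rfl, ?_⟩
  have hcard : (#s : ℝ) ≠ 0 := Nat.cast_ne_zero.mpr hs.card_ne_zero
  simp only [uniformOn, sum_ite_mem, univ_inter, sum_const, nsmul_eq_mul, mul_inv_cancel₀ hcard]

lemma IsPMF.prod (hp : IsPMF p) (hr : IsPMF r) : IsPMF fun ω : α × β => p ω.1 * r ω.2 :=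
  ⟨fun ω => mul_nonneg (hp.1 ω.1) (hr.1 ω.2), by
    rw [Fintype.sum_prod_type, ← Fintype.sum_mul_sum, hp.2, hr.2, mul_one]⟩

lemma pushforward_prod_input_output (p : α → ℝ) (r : β → ℝ) (k : α → β → γ) (x : α) (y : γ) :
    pushforward (fun ω : α × β => p ω.1 * r ω.2) (fun ω => (ω.1, k ω.1 ω.2)) (x, y) =
      p x * pushforward r (k x) y := by
  simp only [pushforward, Prod.mk.injEq, ite_and, Fintype.sum_prod_type, mul_sum, mul_ite, mul_zero]
  rw [Fintype.sum_eq_single x fun x' hx' => by simp only [hx', if_false, sum_const_zero]]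
  simp only [if_true]

lemma pushforward_prod_fst (p : α → ℝ) (hr : ∑ b, r b = 1) (x : α) :
    pushforward (fun ω : α × β => p ω.1 * r ω.2) Prod.fst x = p x := by
  simp only [pushforward, Fintype.sum_prod_type]
  rw [Fintype.sum_eq_single x fun x' hx' => by simp only [hx', if_false, sum_const_zero]]
  simp only [if_true, ← mul_sum, hr, mul_one]

lemma pushforward_eq_of_isIndep_input_output (hr : ∑ b, r b = 1) {k : α → β → γ}
    (hindep : IsIndep (fun ω : α × β => p ω.1 * r ω.2) Prod.fst fun ω => k ω.1 ω.2)
    {x x' : α} (hx : p x ≠ 0) (hx' : p x' ≠ 0) :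
    pushforward r (k x) = pushforward r (k x') := by
  have hout : ∀ z, p z ≠ 0 → ∀ y, pushforward r (k z) y =
      pushforward (fun ω : α × β => p ω.1 * r ω.2) (fun ω => k ω.1 ω.2) y := by
    intro z hz y
    have h := hindep (z, y)
    rw [pushforward_prod_input_output, pushforward_prod_fst p hr] at h
    exact mul_left_cancel₀ hz h
  exact funext fun y => (hout x hx y).trans (hout x' hx' y).symm

end Channel

section LinearAlgebra

variable {K V W : Type*} [Field K] [AddCommGroup V] [Module K V] [AddCommGroup W] [Module K W]

lemma exists_linearEquiv_comp_eq_of_ker_eq {f f' : W →ₗ[K] V}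
    [FiniteDimensional K (LinearMap.range f)] (hker : LinearMap.ker f = LinearMap.ker f') :
    ∃ g : V ≃ₗ[K] V, ∀ w, g (f w) = f' w := by
  let e : LinearMap.range f ≃ₗ[K] LinearMap.range f' :=
    f.quotKerEquivRange.symm ≪≫ₗ Submodule.quotEquivOfEq _ _ hker ≪≫ₗ f'.quotKerEquivRange
  obtain ⟨g, hg⟩ := Submodule.exists_linearEquiv_restrict_eq e
  refine ⟨g, fun w => ?_⟩
  have he : e ⟨f w, LinearMap.mem_range_self f w⟩ = ⟨f' w, LinearMap.mem_range_self f' w⟩ := by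
    simp only [e, LinearEquiv.trans_apply, LinearMap.quotKerEquivRange_symm_apply_image,
      Submodule.mkQ_apply, Submodule.quotEquivOfEq_mk]
    rfl
  rw [← hg ⟨f w, LinearMap.mem_range_self f w⟩, he]

lemma exists_linearEquiv_comp_eq_and_map_eq [FiniteDimensional K V] {f f' : W →ₗ[K] V}
    {U U' : Submodule K V} (hf : LinearMap.range f ≤ U) (hf' : LinearMap.range f' ≤ U')
    (hker : LinearMap.ker f = LinearMap.ker f') (hrank : finrank K U = finrank K U') :
    ∃ g : V ≃ₗ[K] V, (∀ w, g (f w) = f' w) ∧ U.map (g : V →ₗ[K] V) = U' := by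
  let φ : W →ₗ[K] U := f.codRestrict U fun w => hf (LinearMap.mem_range_self f w)
  let φ' : W →ₗ[K] U' := f'.codRestrict U' fun w => hf' (LinearMap.mem_range_self f' w)
  let e₀ : U ≃ₗ[K] U' := LinearEquiv.ofFinrankEq U U' hrank
  have hφ : LinearMap.ker (e₀.toLinearMap ∘ₗ φ) = LinearMap.ker φ' := by
    rw [LinearEquiv.ker_comp, LinearMap.ker_codRestrict, LinearMap.ker_codRestrict, hker]
  obtain ⟨e₁, he₁⟩ := exists_linearEquiv_comp_eq_of_ker_eq hφ
  obtain ⟨g, hg⟩ := Submodule.exists_linearEquiv_restrict_eq (e₀ ≪≫ₗ e₁)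
  refine ⟨g, fun w => ?_, ?_⟩
  · exact (hg (φ w)).symm.trans (congrArg Subtype.val (he₁ w))
  · calc U.map g.toLinearMap
        = LinearMap.range (g.toLinearMap ∘ₗ U.subtype) := by
          rw [LinearMap.range_comp, Submodule.range_subtype]
      _ = LinearMap.range (U'.subtype ∘ₗ (e₀ ≪≫ₗ e₁).toLinearMap) :=
          congrArg LinearMap.range (LinearMap.ext fun u => (hg u).symm)
      _ = U' := by rw [LinearEquiv.range_comp, Submodule.range_subtype]

end LinearAlgebra

section Matrices

omit [Fintype F]

variable {m n k : ℕ}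

lemma colSpace_mul (P : Matrix (Fin k) (Fin m) F) (X : Matrix (Fin m) (Fin n) F) :
    colSpace (P * X) = (colSpace X).map P.mulVecLin := by
  rw [colSpace, mulVecLin_mul, LinearMap.range_comp, colSpace]

lemma finrank_rowSpace (X : Matrix (Fin m) (Fin n) F) :
    finrank F (rowSpace X) = finrank F (colSpace X) :=
  X.rank_transpose

lemma mem_ker_mulVecLin_iff_forall_rowSpace {X : Matrix (Fin m) (Fin n) F} {v : Fin n → F} :
    v ∈ LinearMap.ker X.mulVecLin ↔ ∀ w ∈ rowSpace X, w ⬝ᵥ v = 0 := by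
  have hdot : ∀ u, (Xᵀ *ᵥ u) ⬝ᵥ v = u ⬝ᵥ (X *ᵥ v) := fun u => by
    rw [mulVec_transpose, dotProduct_mulVec]
  rw [LinearMap.mem_ker, mulVecLin_apply, ← dotProduct_eq_zero_iff]
  simp only [rowSpace, colSpace, LinearMap.mem_range, mulVecLin_apply, forall_exists_index,
    forall_apply_eq_imp_iff, hdot, dotProduct_comm (X *ᵥ v)]

lemma ker_mulVecLin_eq_of_rowSpace_eq {X : Matrix (Fin m) (Fin n) F}
    {X' : Matrix (Fin k) (Fin n) F} (h : rowSpace X = rowSpace X') :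
    LinearMap.ker X.mulVecLin = LinearMap.ker X'.mulVecLin := by
  ext v
  rw [mem_ker_mulVecLin_iff_forall_rowSpace, mem_ker_mulVecLin_iff_forall_rowSpace, h]

lemma exists_isUnit_mul_eq_and_colSpace_mul_eq {X X' : Matrix (Fin k) (Fin m) F}
    {Y Y' : Matrix (Fin k) (Fin n) F} (hY : colSpace Y ≤ colSpace X)
    (hY' : colSpace Y' ≤ colSpace X') (hX : rowSpace X = rowSpace X')
    (hrow : rowSpace Y = rowSpace Y') :
    ∃ P : Matrix (Fin k) (Fin k) F, IsUnit P ∧ P * Y = Y' ∧ colSpace (P * X) = colSpace X' := by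
  have hrank : finrank F (colSpace X) = finrank F (colSpace X') := by
    rw [← finrank_rowSpace, hX, finrank_rowSpace]
  obtain ⟨g, hgY, hgX⟩ := exists_linearEquiv_comp_eq_and_map_eq hY hY'
    (ker_mulVecLin_eq_of_rowSpace_eq hrow) hrank
  have hP : (LinearMap.toMatrix' g.toLinearMap).mulVecLin = g.toLinearMap :=
    toLin'_toMatrix' g.toLinearMap
  refine ⟨LinearMap.toMatrix' g.toLinearMap, ?_, ?_, ?_⟩
  · exact (LinearMap.isUnit_toMatrix'_iff).mpr ((Module.End.isUnit_iff _).mpr g.bijective)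
  · apply toLin'.injective
    rw [toLin'_mul, toLin'_toMatrix']
    exact LinearMap.ext hgY
  · rw [colSpace_mul, hP, hgX]

end Matrices

section LinearOperatorChannel

variable {T M N : ℕ} {pH : Matrix (Fin M) (Fin N) F → ℝ}

/-- Degraded LOC: I(X;Y) = I(⟨X⟩;⟨Y⟩) for every input PMF. -/
def IsDegraded (T : ℕ) (pH : Matrix (Fin M) (Fin N) F → ℝ) : Prop :=
  ∀ pX : Matrix (Fin T) (Fin M) F → ℝ, IsPMF pX → miXY pX pH = miColCol pX pH

/-- The transition probability P(Y|X) depends on the input X only through its column space. -/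
def ColSpaceInvariant (T : ℕ) (pH : Matrix (Fin M) (Fin N) F → ℝ) : Prop :=
  ∀ X X' : Matrix (Fin T) (Fin M) F, colSpace X = colSpace X' → prXY pH X = prXY pH X'

lemma prXY_eq_pushforward (X : Matrix (Fin T) (Fin M) F) :
    prXY pH X = pushforward pH (X * ·) := by
  ext Y
  simp only [prXY, pushforward]
  congr!

lemma prColY_eq_pushforward_prXY (X : Matrix (Fin T) (Fin M) F) (V : Submodule F (Fin T → F)) :
    prColY T pH X V = pushforward (prXY pH X) colSpace V := by
  rw [prXY_eq_pushforward, ← pushforward_comp]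
  simp only [prColY, pushforward]
  congr!

lemma prXY_mul_left {P : Matrix (Fin T) (Fin T) F} (hP : IsUnit P) (X : Matrix (Fin T) (Fin M) F)
    (Y : Matrix (Fin T) (Fin N) F) : prXY pH (P * X) (P * Y) = prXY pH X Y := by
  have hinj : Function.Injective fun Z : Matrix (Fin T) (Fin N) F => P * Z :=
    Function.LeftInverse.injective (g := fun Z => P⁻¹ * Z) fun Z =>
      nonsing_inv_mul_cancel_left P Z ((isUnit_iff_isUnit_det P).mp hP)
  simp only [prXY, Matrix.mul_assoc, hinj.eq_iff]

theorem IsDegraded.colSpaceInvariant (hdeg : IsDegraded T pH) (hpH : IsPMF pH) :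
    ColSpaceInvariant T pH := by
  intro X X' hXX'
  let s : Finset (Matrix (Fin T) (Fin M) F) := {Z | colSpace Z = colSpace X}
  have hX : X ∈ s := (mem_filter_univ _).mpr rfl
  have hX' : X' ∈ s := (mem_filter_univ _).mpr hXX'.symm
  have hpX : IsPMF (uniformOn s) := isPMF_uniformOn ⟨X, hX⟩
  have hjoint : IsPMF (jointPMF (uniformOn s) pH) := hpX.prod hpH
  have hcol : miColCol (uniformOn s) pH = 0 := by
    refine (mutualInfo_eq_zero_iff_isIndep hjoint).mpr
      (isIndep_of_const_on_support hjoint.2 (a := colSpace X) fun ω hω => ?_)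
    have hmem : ω.1 ∈ s := uniformOn_ne_zero_iff.mp (left_ne_zero_of_mul hω)
    exact (mem_filter_univ ω.1).mp hmem
  have hindep : IsIndep (jointPMF (uniformOn s) pH) Prod.fst fun ω => ω.1 * ω.2 :=
    (mutualInfo_eq_zero_iff_isIndep hjoint).mp ((hdeg _ hpX).trans hcol)
  rw [prXY_eq_pushforward, prXY_eq_pushforward]
  exact pushforward_eq_of_isIndep_input_output hpH.2 hindep
    (uniformOn_ne_zero_iff.mpr hX) (uniformOn_ne_zero_iff.mpr hX')

theorem ColSpaceInvariant.uniqueSubspaceDegradation (h : ColSpaceInvariant T pH) :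
    UniqueSubspaceDegradation T pH := by
  intro V X X' hXX'
  rw [prColY_eq_pushforward_prXY, prColY_eq_pushforward_prXY, h X X' hXX']

theorem ColSpaceInvariant.rowSpaceSymmetric (h : ColSpaceInvariant T pH) :
    RowSpaceSymmetric T pH := by
  intro X X' Y Y' hY hY' hX hrow
  obtain ⟨P, hP, hPY, hPX⟩ := exists_isUnit_mul_eq_and_colSpace_mul_eq hY hY' hX hrow
  rw [← prXY_mul_left hP, hPY, h _ _ hPX]

end LinearOperatorChannel

/-- a degraded LOC has a unique subspace degradation and is
row-space symmetric. -/
theorem degraded_implies_usd_and_rss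
    {F : Type} [Field F] [Fintype F] (T M N : ℕ)
    (pH : Matrix (Fin M) (Fin N) F → ℝ) (hpH : IsPMF pH)
    (hdeg : ∀ pX : Matrix (Fin T) (Fin M) F → ℝ, IsPMF pX →
      miXY pX pH = miColCol pX pH) :
    UniqueSubspaceDegradation T pH ∧ RowSpaceSymmetric T pH := by
  have hinv : ColSpaceInvariant T pH := IsDegraded.colSpaceInvariant hdeg hpH
  exact ⟨hinv.uniqueSubspaceDegradation, hinv.rowSpaceSymmetric⟩

end
end

section
/- If LOC(H,T) is rank symmetric, then it is degraded; that is, I(X;Y) = I(⟨X⟩;⟨Y⟩) for every input PMF p_X on F^{T×M}, where Y = XH. -/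
open scoped Classical
open Finset Matrix Module

noncomputable section

variable {F : Type} [Field F] [Fintype F]

/-! Under a rank-symmetric channel, `P(Y|X)` depends only on `⟨X⟩` and `⟨Y⟩`, so the output
probability `P(Y) = ∑ₓ P(x) P(Y|x)` depends only on `⟨Y⟩`. The likelihood ratio
`P(X,Y) / (P(X) P(Y))` is therefore a function `L(⟨X⟩,⟨Y⟩)`. Summing the identity
`P(X,Y) = P(X) P(Y) L(⟨X⟩,⟨Y⟩)` over the matrices with prescribed column spaces shows that `L` is
also the likelihood ratio of `⟨X⟩` and `⟨Y⟩`, so both mutual informations equal the expectation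
of `log₂ L(⟨X⟩,⟨Y⟩)`. -/

section Law

variable {Ω A B C D : Type*} [Fintype Ω]

/-- The law (pushforward) of the random element `f` when the outcome `ω` has probability `p ω`.
The joint law of `f` and `g` is `law p fun ω ↦ (f ω, g ω)`. -/
def law (p : Ω → ℝ) (f : Ω → A) (a : A) : ℝ := ∑ ω, if f ω = a then p ω else 0

theorem law_comp [Fintype A] (p : Ω → ℝ) (f : Ω → A) (u : A → C) :
    law p (u ∘ f) = law (law p f) u := by
  ext c
  calc ∑ ω, (if u (f ω) = c then p ω else 0)
      = ∑ ω, ∑ a, if f ω = a then (if u a = c then p ω else 0) else 0 := by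
        simp only [Finset.sum_ite_eq, Finset.mem_univ, if_true]
    _ = ∑ a, ∑ ω, if u a = c then (if f ω = a then p ω else 0) else 0 := by
        rw [Finset.sum_comm]
        simp only [← ite_and, and_comm]
    _ = law (law p f) u c := by
        simp only [law, Finset.sum_ite_irrel, Finset.sum_const_zero]

theorem sum_law_prodMk [Fintype A] (p : Ω → ℝ) (f : Ω → A) (g : Ω → B) (b : B) :
    ∑ a, law p (fun ω ↦ (f ω, g ω)) (a, b) = law p g b := by
  simp only [law, Prod.mk.injEq, ite_and]
  rw [Finset.sum_comm]
  simp only [Finset.sum_ite_eq, Finset.mem_univ, if_true]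

theorem law_nonneg {p : Ω → ℝ} (hp : ∀ ω, 0 ≤ p ω) (f : Ω → A) (a : A) : 0 ≤ law p f a :=
  Finset.sum_nonneg fun ω _ ↦ ite_nonneg (hp ω) le_rfl

theorem law_apply_pos {p : Ω → ℝ} (hp : ∀ ω, 0 ≤ p ω) (f : Ω → A) {ω : Ω} (hω : 0 < p ω) :
    0 < law p f (f ω) :=
  Finset.sum_pos' (fun ω' _ ↦ ite_nonneg (hp ω') le_rfl)
    ⟨ω, Finset.mem_univ ω, by rwa [if_pos rfl]⟩

theorem law_le_law_comp {p : Ω → ℝ} (hp : ∀ ω, 0 ≤ p ω) (f : Ω → A) (u : A → C) (a : A) :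
    law p f a ≤ law p (u ∘ f) (u a) := by
  refine Finset.sum_le_sum fun ω _ ↦ ?_
  by_cases hω : f ω = a
  · rw [if_pos hω]
    exact (if_pos (congrArg u hω)).ge
  · rw [if_neg hω]
    exact ite_nonneg (hp ω) le_rfl

theorem law_mul_fst [Fintype A] [Fintype C] (p : A → ℝ) {q : C → ℝ} (hq : ∑ c, q c = 1) :
    law (fun ω : A × C ↦ p ω.1 * q ω.2) Prod.fst = p := by
  ext a
  simp [law, Fintype.sum_prod_type, ← Finset.mul_sum, hq]

theorem law_mul_prodMk [Fintype A] [Fintype C] (p : A → ℝ) (q : C → ℝ) (φ : A → C → B)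
    (a : A) (b : B) :
    law (fun ω : A × C ↦ p ω.1 * q ω.2) (fun ω ↦ (ω.1, φ ω.1 ω.2)) (a, b) =
      p a * law q (φ a) b := by
  simp [law, Fintype.sum_prod_type, Finset.mul_sum, ite_and]

theorem law_mul_prodMap [Fintype A] [Fintype B] (p : A → ℝ) (q : B → ℝ) (u : A → C) (v : B → D)
    (c : C) (d : D) :
    law (fun x : A × B ↦ p x.1 * q x.2) (Prod.map u v) (c, d) = law p u c * law q v d := by
  simp only [law, Fintype.sum_mul_sum, Fintype.sum_prod_type, Prod.map, Prod.mk.injEq,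
    ite_zero_mul_ite_zero]

end Law

section LikelihoodRatio

variable {Ω A B C D : Type*} [Fintype Ω] {p : Ω → ℝ} {f : Ω → A} {g : Ω → B}

/-- `L` is a likelihood ratio of `f` and `g`, i.e. a density of their joint law with respect to the
product of their marginal laws. As there is no division, `L a b` is unconstrained where
a marginal law vanishes. -/
def IsLikelihoodRatio (p : Ω → ℝ) (f : Ω → A) (g : Ω → B) (L : A → B → ℝ) : Prop :=
  ∀ a b, law p (fun ω ↦ (f ω, g ω)) (a, b) = law p f a * law p g b * L a b

theorem isLikelihoodRatio_of_kernel (hp : ∀ ω, 0 ≤ p ω) {K : A → B → ℝ}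
    (hK : ∀ a b, law p (fun ω ↦ (f ω, g ω)) (a, b) = law p f a * K a b) :
    IsLikelihoodRatio p f g fun a b ↦ K a b / law p g b := by
  intro a b
  obtain hg | hg := eq_or_ne (law p g b) 0
  · have joint_le : law p (fun ω ↦ (f ω, g ω)) (a, b) ≤ law p g b :=
      law_le_law_comp hp _ Prod.snd (a, b)
    rw [hg, mul_zero, zero_mul]
    exact le_antisymm (hg ▸ joint_le) (law_nonneg hp _ _)
  · rw [hK, mul_assoc, mul_div_cancel₀ _ hg]

theorem IsLikelihoodRatio.comp [Finite A] [Finite B] {u : A → C} {v : B → D} {L : C → D → ℝ}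
    (hL : IsLikelihoodRatio p f g fun a b ↦ L (u a) (v b)) :
    IsLikelihoodRatio p (u ∘ f) (v ∘ g) L := by
  have := Fintype.ofFinite A
  have := Fintype.ofFinite B
  intro c d
  calc law p (fun ω ↦ ((u ∘ f) ω, (v ∘ g) ω)) (c, d)
      = law (law p fun ω ↦ (f ω, g ω)) (Prod.map u v) (c, d) :=
        congrFun (law_comp p (fun ω ↦ (f ω, g ω)) (Prod.map u v)) (c, d)
    _ = law (fun x : A × B ↦ law p f x.1 * law p g x.2) (Prod.map u v) (c, d) * L c d := by
        rw [law, law, Finset.sum_mul]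
        refine Finset.sum_congr rfl fun ⟨a, b⟩ _ ↦ ?_
        rw [ite_mul, zero_mul]
        split_ifs with hab
        · obtain ⟨rfl, rfl⟩ := Prod.mk.inj hab
          exact hL a b
        · rfl
    _ = law p (u ∘ f) c * law p (v ∘ g) d * L c d := by
        rw [law_mul_prodMap, law_comp, law_comp]

theorem mutualInfo_eq_sum_law (p : Ω → ℝ) (f : Ω → A) (g : Ω → B) :
    mutualInfo p f g = ∑ ω, p ω * Real.logb 2
      (law p (fun ω ↦ (f ω, g ω)) (f ω, g ω) / (law p f (f ω) * law p g (g ω))) := by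
  simp only [mutualInfo, law, Prod.mk.injEq]

theorem IsLikelihoodRatio.mutualInfo_eq_sum (hp : ∀ ω, 0 ≤ p ω) {L : A → B → ℝ}
    (hL : IsLikelihoodRatio p f g L) :
    mutualInfo p f g = ∑ ω, p ω * Real.logb 2 (L (f ω) (g ω)) := by
  rw [mutualInfo_eq_sum_law]
  refine Finset.sum_congr rfl fun ω _ ↦ ?_
  obtain hω | hω := (hp ω).eq_or_lt
  · simp only [← hω, zero_mul]
  · have hf := law_apply_pos hp f hω
    have hg := law_apply_pos hp g hω
    rw [hL, mul_div_cancel_left₀ _ (mul_pos hf hg).ne']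

theorem IsLikelihoodRatio.mutualInfo_comp [Finite A] [Finite B] (hp : ∀ ω, 0 ≤ p ω)
    {u : A → C} {v : B → D} {L : C → D → ℝ}
    (hL : IsLikelihoodRatio p f g fun a b ↦ L (u a) (v b)) :
    mutualInfo p (u ∘ f) (v ∘ g) = mutualInfo p f g :=
  (hL.comp.mutualInfo_eq_sum hp).trans (hL.mutualInfo_eq_sum hp).symm

theorem mutualInfo_comp_of_kernel [Finite A] [Finite B] (hp : ∀ ω, 0 ≤ p ω)
    {u : A → C} {v : B → D} {K : C → D → ℝ}
    (hK : ∀ a b, law p (fun ω ↦ (f ω, g ω)) (a, b) = law p f a * K (u a) (v b)) :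
    mutualInfo p (u ∘ f) (v ∘ g) = mutualInfo p f g := by
  have := Fintype.ofFinite A
  let Q (d : D) : ℝ := ∑ a, law p f a * K (u a) d
  have law_g (b : B) : law p g b = Q (v b) := by
    simp only [← sum_law_prodMk p f g b, hK, Q]
  refine IsLikelihoodRatio.mutualInfo_comp (L := fun c d ↦ K c d / Q d) hp ?_
  simpa only [law_g] using isLikelihoodRatio_of_kernel hp hK

end LikelihoodRatio

theorem prXY_eq_law {k M N : ℕ} (pH : Matrix (Fin M) (Fin N) F → ℝ)
    (X : Matrix (Fin k) (Fin M) F) (Y : Matrix (Fin k) (Fin N) F) :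
    prXY pH X Y = law pH (X * ·) Y := by
  unfold prXY law
  -- The two sides differ only in the `Decidable` instance.
  congr!

theorem rank_symmetric_implies_degraded_general {T M N : ℕ}
    {pH : Matrix (Fin M) (Fin N) F → ℝ} (hpH : IsPMF pH)
    {K : Submodule F (Fin T → F) → Submodule F (Fin T → F) → ℝ}
    (hK : ∀ X Y, prXY pH X Y = K (colSpace X) (colSpace Y))
    {pX : Matrix (Fin T) (Fin M) F → ℝ} (hpX : IsPMF pX) :
    miXY pX pH = miColCol pX pH := by
  have jointPMF_nonneg (ω) : 0 ≤ jointPMF pX pH ω := mul_nonneg (hpX.1 ω.1) (hpH.1 ω.2)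
  refine (mutualInfo_comp_of_kernel (f := Prod.fst) (g := fun ω ↦ ω.1 * ω.2) (u := colSpace)
    (v := colSpace) (K := K) jointPMF_nonneg fun X Y ↦ ?_).symm
  calc law (jointPMF pX pH) (fun ω ↦ (ω.1, ω.1 * ω.2)) (X, Y)
      = pX X * law pH (X * ·) Y := law_mul_prodMk pX pH (· * ·) X Y
    _ = pX X * K (colSpace X) (colSpace Y) := by rw [← prXY_eq_law, hK]
    _ = law (jointPMF pX pH) Prod.fst X * K (colSpace X) (colSpace Y) := by
        rw [show law (jointPMF pX pH) Prod.fst = pX from law_mul_fst pX hpH.2]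

/-- a rank-symmetric LOC is degraded: I(X;Y) = I(⟨X⟩;⟨Y⟩)
for every input PMF. -/
theorem rank_symmetric_implies_degraded
    {F : Type} [Field F] [Fintype F] (T M N : ℕ)
    (pH : Matrix (Fin M) (Fin N) F → ℝ) (hpH : IsPMF pH)
    (hrs : RankSymmetric T pH) :
    ∀ pX : Matrix (Fin T) (Fin M) F → ℝ, IsPMF pX →
      miXY pX pH = miColCol pX pH := by
  obtain ⟨μ, -, hμ⟩ := hrs
  exact fun _ ↦ rank_symmetric_implies_degraded_general hpH
    (K := fun U V ↦ if V ≤ U then μ (finrank F U) (finrank F V) else 0) hμ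

end
end
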